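/- Let a, b ∈ ℍ with Im a ≠ 0 and Im b ≠ 0, and let L(q) = aq + qb. Set λ⁺ = (Re a + Re b)² + (|Im a| + |Im b|)² and λ⁻ = (Re a + Re b)² + (|Im a| − |Im b|)², so λ⁺ > λ⁻ ≥ 0. Then, with the convention 0·log 0 = 0, m_ℍ(L) = (1/2)·((λ⁺·log λ⁺ − λ⁻·log λ⁻)/(λ⁺ − λ⁻) − 1). -/

import Mathlib

open MeasureTheory Quaternion

noncomputable instance : MeasurableSpace (Quaternion ℝ) := borel _
instance : BorelSpace (Quaternion ℝ) := ⟨rfl⟩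
instance : Nonempty (Metric.sphere (0 : Quaternion ℝ) 1) := ⟨⟨1, by simp⟩⟩

/-- The probability Haar measure `μ` on the group `T¹(ℍ)` of unit quaternions
(the Haar measure normalized so that the whole group has measure `1`). -/
noncomputable def muH : Measure (Metric.sphere (0 : Quaternion ℝ) 1) :=
  Measure.haarMeasure ⊤

/-- The quaternionic Mahler measure `m_ℍ(f) = ∫_{T¹(ℍ)} log |f(q)| dμ(q)`. -/
noncomputable def mahlerH (f : Quaternion ℝ → Quaternion ℝ) : ℝ :=
  ∫ q : Metric.sphere (0 : Quaternion ℝ) 1, Real.log ‖f q‖ ∂muH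

/-!
Multiplying by `q̄` gives `|aq + qb| = |a + q b q̄|`, and `q` acts on the imaginary quaternions as a
random rotation. Hence `|aq + qb|²` is `(Re a + Re b)² + |Im a|² + |Im b|²` plus `2 |Im a| |Im b|`
times the inner product of a fixed unit vector with a uniformly distributed unit vector of the
2-sphere. By Archimedes' hat-box theorem that inner product is uniform on `[-1, 1]`, so `|aq + qb|²`
is uniform on `[λ⁻, λ⁺]`, and the Mahler measure is half the average of `log` over this interval.

For the hat-box theorem, differentiating `E[Y Xⁿ⁺¹]` along rotations of the `(X, Y)`-plane gives
`E[Xⁿ⁺²] = (n + 1) E[Xⁿ Y²]`, and likewise with `Z` in place of `Y`. With `X² + Y² + Z² = 1` this is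
the recursion `(n + 3) E[Xⁿ⁺²] = (n + 1) E[Xⁿ]` satisfied by the moments of the uniform law, and a
bounded law is determined by its moments.
-/

open Real ProbabilityTheory
open scoped Nat

local notation "𝕊³" => Metric.sphere (0 : ℍ[ℝ]) 1

section Moments

theorem hasSum_charFun_of_ae_abs_le {μ : Measure ℝ} [IsFiniteMeasure μ] {C : ℝ}
    (hμ : ∀ᵐ x ∂μ, |x| ≤ C) (t : ℝ) :
    HasSum (fun n : ℕ => (t * Complex.I) ^ n / n ! * ↑(∫ x, x ^ n ∂μ)) (charFun μ t) := by
  have hterm (n : ℕ) : (t * Complex.I) ^ n / n ! * ↑(∫ x, x ^ n ∂μ) =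
      ∫ x : ℝ, (t * x * Complex.I) ^ n / (n !) ∂μ := by
    rw [← integral_complex_ofReal, ← integral_const_mul]
    congr 1 with x
    push_cast
    ring
  simp only [hterm, charFun_apply_real]
  refine hasSum_integral_of_dominated_convergence (fun n _ => (|t| * C) ^ n / n !)
    (fun n => by fun_prop) (fun n => hμ.mono fun x hx => ?_)
    (.of_forall fun _ => Real.summable_pow_div_factorial _) (integrable_const _)
    (.of_forall fun x => ?_)
  · simp only [norm_div, norm_pow, norm_mul, Complex.norm_real, norm_eq_abs, Complex.norm_I,
      mul_one, Complex.norm_natCast]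
    gcongr
  · rw [Complex.exp_eq_exp_ℂ]
    exact NormedSpace.expSeries_div_hasSum_exp _

theorem measure_ext_of_integral_pow_eq {μ ν : Measure ℝ} [IsFiniteMeasure μ] [IsFiniteMeasure ν]
    {C : ℝ} (hμ : ∀ᵐ x ∂μ, |x| ≤ C) (hν : ∀ᵐ x ∂ν, |x| ≤ C)
    (h : ∀ n : ℕ, ∫ x, x ^ n ∂μ = ∫ x, x ^ n ∂ν) : μ = ν := by
  refine Measure.ext_of_charFun (funext fun t => ?_)
  refine (hasSum_charFun_of_ae_abs_le hμ t).unique ?_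
  simpa only [h] using hasSum_charFun_of_ae_abs_le hν t

end Moments

section Uniform

variable {Ω : Type*} [MeasurableSpace Ω] {P : Measure Ω}

variable {E F : Type*} [MeasurableSpace E] [NormedAddCommGroup F] [NormedSpace ℝ F]

theorem integral_cond_eq_setAverage (μ : Measure E) (s : Set E) (f : E → F) :
    ∫ x, f x ∂μ[|s] = ⨍ x in s, f x ∂μ := by
  rw [average, Measure.restrict_apply_univ, ProbabilityTheory.cond]

theorem integral_comp_of_isUniform {μ : Measure E} {X : Ω → E} {s : Set E} (hXm : AEMeasurable X P)
    (hX : pdf.IsUniform X s P μ) {f : E → F} (hf : StronglyMeasurable f) :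
    ∫ ω, f (X ω) ∂P = ⨍ x in s, f x ∂μ := by
  rw [← integral_map hXm hf.aestronglyMeasurable, hX, integral_cond_eq_setAverage]

theorem isUniform_const_add_mul {X : Ω → ℝ} (hXm : AEMeasurable X P) {s : Set ℝ}
    (hs : MeasurableSet s) (c : ℝ) {d : ℝ} (hd : d ≠ 0)
    (hX : pdf.IsUniform X ((fun x => c + d * x) ⁻¹' s) P) :
    pdf.IsUniform (fun ω => c + d * X ω) s P := by
  have haff : Measurable fun x : ℝ => c + d * x := by fun_prop
  have hvol (A : Set ℝ) :
      volume ((fun x => c + d * x) ⁻¹' A) = ENNReal.ofReal |d⁻¹| * volume A := by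
    change volume ((d * ·) ⁻¹' ((c + ·) ⁻¹' A)) = _
    rw [Real.volume_preimage_mul_left hd, measure_preimage_add]
  have hd0 : ENNReal.ofReal |d⁻¹| ≠ 0 := by simpa using hd
  change P.map ((fun x => c + d * x) ∘ X) = _
  rw [← AEMeasurable.map_map_of_aemeasurable haff.aemeasurable hXm, hX]
  ext A hA
  rw [Measure.map_apply haff hA, cond_apply (haff hs), cond_apply hs,
    ← Set.preimage_inter, hvol, hvol,
    ENNReal.mul_inv (.inl hd0) (.inl ENNReal.ofReal_ne_top), mul_mul_mul_comm,
    ENNReal.inv_mul_cancel hd0 ENNReal.ofReal_ne_top, one_mul]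

theorem intervalAverage_log {a b : ℝ} (hab : a ≠ b) :
    ⨍ x in a..b, log x = (b * log b - a * log a) / (b - a) - 1 := by
  have : b - a ≠ 0 := sub_ne_zero.2 hab.symm
  rw [interval_average_eq_div, integral_log]
  field_simp
  ring

theorem average_pow_Icc_neg_one_one (n : ℕ) :
    ⨍ x in Set.Icc (-1 : ℝ) 1, x ^ n = (1 - (-1) ^ (n + 1)) / (2 * (n + 1)) := by
  rw [setAverage_eq, integral_Icc_eq_integral_Ioc, ← intervalIntegral.integral_of_le (by norm_num),
    integral_pow, Real.volume_real_Icc_of_le (by norm_num), one_pow, smul_eq_mul]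
  field_simp
  ring

end Uniform

section Flow

variable {Ω : Type*} [MeasurableSpace Ω] {P : Measure Ω}

variable {E : Type*} [NormedAddCommGroup E] [NormedSpace ℝ E]

theorem integral_comp_of_measurePreserving {Ω' : Type*} [MeasurableSpace Ω'] {P' : Measure Ω'}
    {T : Ω → Ω'} (hT : MeasurePreserving T P P') {f : Ω' → E} (hf : AEStronglyMeasurable f P') :
    ∫ ω, f (T ω) ∂P = ∫ ω, f ω ∂P' := by
  rw [← integral_map hT.aemeasurable (hT.map_eq.symm ▸ hf), hT.map_eq]

theorem integral_eq_zero_of_hasDerivAt_flow {T : ℝ → Ω → Ω}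
    (hT : ∀ t, MeasurePreserving (T t) P P) {f D : Ω → E} {bound : Ω → ℝ} (hf : Integrable f P)
    (hD : AEStronglyMeasurable D P) (hbound : Integrable bound P)
    (hle : ∀ t ω, ‖D (T t ω)‖ ≤ bound ω)
    (hderiv : ∀ t ω, HasDerivAt (fun s => f (T s ω)) (D (T t ω)) t) : ∫ ω, D ω ∂P = 0 := by
  have hconst (t : ℝ) : ∫ ω, f (T t ω) ∂P = ∫ ω, f ω ∂P :=
    integral_comp_of_measurePreserving (hT t) hf.aestronglyMeasurable
  have h := (hasDerivAt_integral_of_dominated_loc_of_deriv_le (μ := P) (x₀ := (0 : ℝ))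
    (F := fun t ω => f (T t ω)) (F' := fun t ω => D (T t ω)) Filter.univ_mem
    (.of_forall fun t => ((hT t).integrable_comp_of_integrable hf).aestronglyMeasurable)
    ((hT 0).integrable_comp_of_integrable hf) (hD.comp_measurePreserving (hT 0))
    (.of_forall fun ω t _ => hle t ω) hbound (.of_forall fun ω t _ => hderiv t ω)).2
  simp only [hconst, integral_comp_of_measurePreserving (hT 0) hD] at h
  exact h.unique (hasDerivAt_const 0 _)

/-- A family `T` of measure-preserving maps along which the planar random vector `(X, Y)` turns
about the origin at unit angular speed. It witnesses the invariance of the law of `(X, Y)` under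
rotations. -/
structure IsRotatingFlow (P : Measure Ω) (T : ℝ → Ω → Ω) (X Y : Ω → ℝ) : Prop where
  measurePreserving : ∀ t, MeasurePreserving (T t) P P
  fst_apply : ∀ t ω, X (T t ω) = cos t * X ω - sin t * Y ω
  snd_apply : ∀ t ω, Y (T t ω) = sin t * X ω + cos t * Y ω

namespace IsRotatingFlow

variable {T : ℝ → Ω → Ω} {X Y : Ω → ℝ}

theorem hasDerivAt_fst (h : IsRotatingFlow P T X Y) (t : ℝ) (ω : Ω) :
    HasDerivAt (fun s => X (T s ω)) (-Y (T t ω)) t := by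
  simp only [h.fst_apply, h.snd_apply]
  exact (((hasDerivAt_cos t).mul_const _).sub ((hasDerivAt_sin t).mul_const _)).congr_deriv
    (by ring)

theorem hasDerivAt_snd (h : IsRotatingFlow P T X Y) (t : ℝ) (ω : Ω) :
    HasDerivAt (fun s => Y (T s ω)) (X (T t ω)) t := by
  simp only [h.fst_apply, h.snd_apply]
  exact (((hasDerivAt_sin t).mul_const _).add ((hasDerivAt_cos t).mul_const _)).congr_deriv
    (by ring)

theorem integral_fst_eq_zero (h : IsRotatingFlow P T X Y) (hX : AEStronglyMeasurable X P) :
    ∫ ω, X ω ∂P = 0 := by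
  have hneg := integral_comp_of_measurePreserving (h.measurePreserving π) hX
  simp only [h.fst_apply, cos_pi, sin_pi, neg_one_mul, zero_mul, sub_zero, integral_neg] at hneg
  linarith

theorem integral_fst_pow_add_two [IsFiniteMeasure P] (h : IsRotatingFlow P T X Y)
    (hXm : Measurable X) (hYm : Measurable Y) {C : ℝ} (hX : ∀ ω, |X ω| ≤ C)
    (hY : ∀ ω, |Y ω| ≤ C) (n : ℕ) :
    ∫ ω, X ω ^ (n + 2) ∂P = (n + 1) * ∫ ω, X ω ^ n * Y ω ^ 2 ∂P := by
  have hpow (k : ℕ) (ω : Ω) : |X ω ^ k| ≤ C ^ k := by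
    rw [abs_pow]
    gcongr
    exact hX ω
  have hmul (ω : Ω) : |X ω ^ n * Y ω ^ 2| ≤ C ^ n * C ^ 2 := by
    rw [abs_mul, abs_pow _ 2]
    gcongr
    exacts [(abs_nonneg _).trans (hpow n ω), hpow n ω, hY ω]
  have hXint : Integrable (fun ω => X ω ^ (n + 2)) P :=
    .of_bound (by fun_prop) _ (.of_forall (hpow (n + 2)))
  have hXYint : Integrable (fun ω => X ω ^ n * Y ω ^ 2) P :=
    .of_bound (by fun_prop) _ (.of_forall hmul)
  have hfint : Integrable (fun ω => Y ω * X ω ^ (n + 1)) P := by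
    refine .of_bound (by fun_prop) (C * C ^ (n + 1)) (.of_forall fun ω => ?_)
    rw [norm_mul]
    gcongr
    exacts [(abs_nonneg _).trans (hY ω), hY ω, hpow (n + 1) ω]
  have hzero : ∫ ω, (X ω ^ (n + 2) - (n + 1) * (X ω ^ n * Y ω ^ 2)) ∂P = 0 := by
    refine integral_eq_zero_of_hasDerivAt_flow h.measurePreserving hfint
      (hXint.sub (hXYint.const_mul _)).aestronglyMeasurable
      (integrable_const (C ^ (n + 2) + (n + 1) * (C ^ n * C ^ 2))) (fun t ω => ?_) fun t ω => ?_
    · refine (abs_sub _ _).trans ?_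
      rw [abs_mul, abs_of_nonneg (by positivity : (0 : ℝ) ≤ n + 1)]
      gcongr
      exacts [hpow _ _, hmul _]
    · refine ((h.hasDerivAt_snd t ω).mul ((h.hasDerivAt_fst t ω).pow (n + 1))).congr_deriv ?_
      simp only [Pi.pow_apply, Nat.add_sub_cancel, Nat.cast_add, Nat.cast_one]
      ring
  rw [integral_sub hXint (hXYint.const_mul _), integral_const_mul] at hzero
  exact sub_eq_zero.1 hzero

end IsRotatingFlow

end Flow

section HatBox

variable {Ω : Type*} [MeasurableSpace Ω] {P : Measure Ω} {X Y Z : Ω → ℝ} {S T : ℝ → Ω → Ω}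

theorem abs_le_one_of_sq_add_sq_add_sq_eq_one {x y z : ℝ} (h : x ^ 2 + y ^ 2 + z ^ 2 = 1) :
    |x| ≤ 1 :=
  (sq_le_one_iff_abs_le_one x).1 (by linarith [sq_nonneg y, sq_nonneg z])

theorem integral_pow_add_two_of_rotatingFlows [IsFiniteMeasure P] (hXm : Measurable X)
    (hYm : Measurable Y) (hZm : Measurable Z) (hsphere : ∀ ω, X ω ^ 2 + Y ω ^ 2 + Z ω ^ 2 = 1)
    (hXY : IsRotatingFlow P S X Y) (hXZ : IsRotatingFlow P T X Z) (n : ℕ) :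
    (n + 3) * ∫ ω, X ω ^ (n + 2) ∂P = (n + 1) * ∫ ω, X ω ^ n ∂P := by
  have hX (ω) : |X ω| ≤ 1 := abs_le_one_of_sq_add_sq_add_sq_eq_one (hsphere ω)
  have hY (ω) : |Y ω| ≤ 1 :=
    abs_le_one_of_sq_add_sq_add_sq_eq_one (y := X ω) (z := Z ω) (by linarith [hsphere ω])
  have hZ (ω) : |Z ω| ≤ 1 :=
    abs_le_one_of_sq_add_sq_add_sq_eq_one (y := X ω) (z := Y ω) (by linarith [hsphere ω])
  have hint {W : Ω → ℝ} (hWm : Measurable W) (hW : ∀ ω, |W ω| ≤ 1) :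
      Integrable (fun ω => X ω ^ n * W ω ^ 2) P := by
    refine .of_bound (by fun_prop) 1 (.of_forall fun ω => ?_)
    rw [norm_mul, norm_pow, norm_pow]
    exact mul_le_one₀ (pow_le_one₀ (abs_nonneg _) (hX ω)) (by positivity)
      (pow_le_one₀ (abs_nonneg _) (hW ω))
  have hsum : ∫ ω, X ω ^ n ∂P = ∫ ω, X ω ^ (n + 2) ∂P + ∫ ω, X ω ^ n * Y ω ^ 2 ∂P +
      ∫ ω, X ω ^ n * Z ω ^ 2 ∂P := by
    simp only [pow_add]
    rw [← integral_add (hint hXm hX) (hint hYm hY), ← integral_add _ (hint hZm hZ)]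
    · congr 1 with ω
      linear_combination -(X ω ^ n) * hsphere ω
    · exact (hint hXm hX).add (hint hYm hY)
  have hY2 := hXY.integral_fst_pow_add_two hXm hYm hX hY n
  have hZ2 := hXZ.integral_fst_pow_add_two hXm hZm hX hZ n
  linear_combination hY2 + hZ2 - (n + 1) * hsum

theorem isUniform_of_rotatingFlows [IsProbabilityMeasure P] (hXm : Measurable X)
    (hYm : Measurable Y) (hZm : Measurable Z) (hsphere : ∀ ω, X ω ^ 2 + Y ω ^ 2 + Z ω ^ 2 = 1)
    (hXY : IsRotatingFlow P S X Y) (hXZ : IsRotatingFlow P T X Z) :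
    pdf.IsUniform X (Set.Icc (-1) 1) P := by
  have hmoment (n : ℕ) : ∫ ω, X ω ^ n ∂P = (1 - (-1) ^ (n + 1)) / (2 * (n + 1)) := by
    induction n using Nat.twoStepInduction with
    | zero => norm_num
    | one => simpa using hXY.integral_fst_eq_zero hXm.aestronglyMeasurable
    | more n ih _ =>
      have hrec := integral_pow_add_two_of_rotatingFlows hXm hYm hZm hsphere hXY hXZ n
      rw [ih] at hrec
      rw [eq_div_iff (by positivity)]
      push_cast
      field_simp at hrec
      linear_combination hrec
  refine measure_ext_of_integral_pow_eq (C := 1) ?_ ?_ fun n => ?_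
  · exact (ae_map_iff hXm.aemeasurable (measurableSet_le (by fun_prop) (by fun_prop))).2
      (.of_forall fun ω => abs_le_one_of_sq_add_sq_add_sq_eq_one (hsphere ω))
  · exact (ae_cond_mem measurableSet_Icc).mono fun x hx => abs_le.2 hx
  · rw [integral_map hXm.aemeasurable (by fun_prop), hmoment, ← average_pow_Icc_neg_one_one,
      integral_cond_eq_setAverage]

end HatBox

section UnitQuaternions

instance : IsProbabilityMeasure muH :=
  ⟨by simpa only [muH] using! Measure.haarMeasure_self (G := 𝕊³) (K₀ := ⊤)⟩

instance : muH.IsMulLeftInvariant := by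
  unfold muH
  infer_instance

/-- The quaternion with the given coordinates in the basis `1, i, j, k`. Unlike the anonymous
constructor, which elaborates to a term of the unfolded type `ℍ[ℝ, -1, 0, -1]`, it has type `ℍ[ℝ]`,
as the simplification lemmas for quaternions require. -/
@[simps]
def quat (r x y z : ℝ) : ℍ[ℝ] := ⟨r, x, y, z⟩

theorem mem_unitSphere_iff_normSq {q : ℍ[ℝ]} : q ∈ 𝕊³ ↔ normSq q = 1 := by
  rw [mem_sphere_zero_iff_norm, normSq_eq_norm_mul_self, ← sq,
    pow_eq_one_iff_of_nonneg (norm_nonneg q) two_ne_zero]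

/-- The rotation `v ↦ q v q̄` of `ℍ` attached to a unit quaternion `q`. It fixes the real axis and
acts on the imaginary quaternions as an element of `SO(3)`. -/
noncomputable def conjRotation (q : 𝕊³) : ℍ[ℝ] →ₗᵢ[ℝ] ℍ[ℝ] where
  toFun v := q * v * star (q : ℍ[ℝ])
  map_add' v w := by rw [mul_add, add_mul]
  map_smul' r v := by simp only [mul_smul_comm, smul_mul_assoc, RingHom.id_apply]
  norm_map' v := by
    change ‖q * v * star (q : ℍ[ℝ])‖ = ‖v‖
    rw [norm_mul, norm_mul, norm_star, norm_eq_of_mem_sphere, one_mul, mul_one]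

theorem conjRotation_apply (q : 𝕊³) (v : ℍ[ℝ]) : conjRotation q v = q * v * star (q : ℍ[ℝ]) := rfl

theorem conjRotation_mul (p q : 𝕊³) (v : ℍ[ℝ]) :
    conjRotation (p * q) v = conjRotation p (conjRotation q v) := by
  simp only [conjRotation_apply, Metric.unitSphere.coe_mul, star_mul, mul_assoc]

theorem continuous_conjRotation_left (v : ℍ[ℝ]) : Continuous fun q => conjRotation q v := by
  simp only [conjRotation_apply]
  fun_prop

theorem mul_star_self_of_mem_sphere (q : 𝕊³) : (q : ℍ[ℝ]) * star (q : ℍ[ℝ]) = 1 := by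
  rw [self_mul_star, mem_unitSphere_iff_normSq.1 q.2, coe_one]

theorem star_mul_self_of_mem_sphere (q : 𝕊³) : star (q : ℍ[ℝ]) * (q : ℍ[ℝ]) = 1 := by
  rw [star_mul_self, mem_unitSphere_iff_normSq.1 q.2, coe_one]

theorem conjRotation_coe (q : 𝕊³) (r : ℝ) : conjRotation q r = r := by
  rw [conjRotation_apply, ← coe_commutes, mul_assoc, mul_star_self_of_mem_sphere, mul_one]

theorem re_eq_inner_one (v : ℍ[ℝ]) : v.re = inner ℝ 1 v := by
  rw [real_inner_comm, inner_def, star_one, mul_one]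

theorem re_conjRotation (q : 𝕊³) (v : ℍ[ℝ]) : (conjRotation q v).re = v.re := by
  rw [re_eq_inner_one, re_eq_inner_one, ← (conjRotation q).inner_map_map 1 v]
  congr 1
  exact_mod_cast (conjRotation_coe q 1).symm

theorem exists_conjRotation_eq_of_mul_eq_mul {u v w : ℍ[ℝ]} (hw : w ≠ 0) (h : w * v = u * w) :
    ∃ p : 𝕊³, conjRotation p v = u := by
  let p : 𝕊³ := ⟨(‖w‖⁻¹ : ℝ) • w, mem_sphere_zero_iff_norm.2 (norm_smul_inv_norm (𝕜 := ℝ) hw)⟩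
  have hp : (p : ℍ[ℝ]) * v = u * p := by
    rw [smul_mul_assoc, h, mul_smul_comm]
  refine ⟨p, ?_⟩
  rw [conjRotation_apply, hp, mul_assoc, mul_star_self_of_mem_sphere, mul_one]

theorem mul_self_eq_neg_one {u : ℍ[ℝ]} (hu : u.re = 0) (hu1 : ‖u‖ = 1) : u * u = -1 := by
  rw [← sq, sq_eq_neg_normSq.2 hu, normSq_eq_norm_mul_self, hu1, one_mul, coe_one]

theorem exists_conjRotation_I_eq {u : ℍ[ℝ]} (hu : u.re = 0) (hu1 : ‖u‖ = 1) :
    ∃ p : 𝕊³, conjRotation p (Complex.I : ℂ) = u := by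
  by_cases h : u + (Complex.I : ℂ) = 0
  · rw [eq_neg_of_add_eq_zero_left h]
    refine exists_conjRotation_eq_of_mul_eq_mul (w := quat 0 0 1 0)
      (fun h0 => one_ne_zero (congrArg QuaternionAlgebra.imJ h0)) ?_
    ext <;> simp
  · refine exists_conjRotation_eq_of_mul_eq_mul h ?_
    have hI : ((Complex.I : ℂ) : ℍ[ℝ]) * (Complex.I : ℂ) = -1 := by
      rw [← coeComplex_mul, Complex.I_mul_I]
      ext <;> simp
    rw [add_mul, mul_add, hI, mul_self_eq_neg_one hu hu1, add_comm]

theorem inner_I_eq_imI (v : ℍ[ℝ]) : inner ℝ ((Complex.I : ℂ) : ℍ[ℝ]) v = v.imI := by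
  simp [inner_def]

/-- The unit quaternion `cos (t / 2) + sin (t / 2) k`, whose rotation turns `i` towards `j` by the
angle `t`. -/
noncomputable def rotorIJ (t : ℝ) : 𝕊³ :=
  ⟨quat (cos (t / 2)) 0 0 (sin (t / 2)), mem_unitSphere_iff_normSq.2 <| by
    rw [normSq_def']
    simp⟩

/-- The unit quaternion `cos (t / 2) - sin (t / 2) j`, whose rotation turns `i` towards `k` by the
angle `t`. -/
noncomputable def rotorIK (t : ℝ) : 𝕊³ :=
  ⟨quat (cos (t / 2)) 0 (-sin (t / 2)) 0, mem_unitSphere_iff_normSq.2 <| by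
    rw [normSq_def']
    simp⟩

theorem cos_eq_cos_half_sq_sub (t : ℝ) : cos t = cos (t / 2) ^ 2 - sin (t / 2) ^ 2 := by
  rw [← cos_two_mul', mul_div_cancel₀ t two_ne_zero]

theorem sin_eq_two_mul_sin_half_mul (t : ℝ) : sin t = 2 * sin (t / 2) * cos (t / 2) := by
  rw [← sin_two_mul, mul_div_cancel₀ t two_ne_zero]

theorem conjRotation_rotorIJ (t : ℝ) (v : ℍ[ℝ]) : conjRotation (rotorIJ t) v =
    quat v.re (cos t * v.imI - sin t * v.imJ) (sin t * v.imI + cos t * v.imJ) v.imK := by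
  rw [conjRotation_apply, cos_eq_cos_half_sq_sub t, sin_eq_two_mul_sin_half_mul t]
  ext <;> simp only [rotorIJ, re_mul, imI_mul, imJ_mul, imK_mul, re_star, imI_star, imJ_star,
    imK_star, re_quat, imI_quat, imJ_quat, imK_quat]
  · linear_combination v.re * cos_sq_add_sin_sq (t / 2)
  · ring
  · ring
  · linear_combination v.imK * cos_sq_add_sin_sq (t / 2)

theorem conjRotation_rotorIK (t : ℝ) (v : ℍ[ℝ]) : conjRotation (rotorIK t) v =
    quat v.re (cos t * v.imI - sin t * v.imK) v.imJ (sin t * v.imI + cos t * v.imK) := by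
  rw [conjRotation_apply, cos_eq_cos_half_sq_sub t, sin_eq_two_mul_sin_half_mul t]
  ext <;> simp only [rotorIK, re_mul, imI_mul, imJ_mul, imK_mul, re_star, imI_star, imJ_star,
    imK_star, re_quat, imI_quat, imJ_quat, imK_quat]
  · linear_combination v.re * cos_sq_add_sin_sq (t / 2)
  · ring
  · linear_combination v.imJ * cos_sq_add_sin_sq (t / 2)
  · ring

theorem isRotatingFlow_rotorIJ (v : ℍ[ℝ]) :
    IsRotatingFlow muH (fun t q => rotorIJ t * q) (fun q => (conjRotation q v).imI)
      (fun q => (conjRotation q v).imJ) where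
  measurePreserving t := measurePreserving_mul_left muH (rotorIJ t)
  fst_apply t q := by rw [conjRotation_mul, conjRotation_rotorIJ, imI_quat]
  snd_apply t q := by rw [conjRotation_mul, conjRotation_rotorIJ, imJ_quat]

theorem isRotatingFlow_rotorIK (v : ℍ[ℝ]) :
    IsRotatingFlow muH (fun t q => rotorIK t * q) (fun q => (conjRotation q v).imI)
      (fun q => (conjRotation q v).imK) where
  measurePreserving t := measurePreserving_mul_left muH (rotorIK t)
  fst_apply t q := by rw [conjRotation_mul, conjRotation_rotorIK, imI_quat]
  snd_apply t q := by rw [conjRotation_mul, conjRotation_rotorIK, imK_quat]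

theorem isUniform_imI_conjRotation {v : ℍ[ℝ]} (hv : v.re = 0) (hv1 : ‖v‖ = 1) :
    pdf.IsUniform (fun q => (conjRotation q v).imI) (Set.Icc (-1) 1) muH := by
  have hcont := continuous_conjRotation_left v
  refine isUniform_of_rotatingFlows (continuous_imI.comp hcont).measurable
    (continuous_imJ.comp hcont).measurable (continuous_imK.comp hcont).measurable (fun q => ?_)
    (isRotatingFlow_rotorIJ v) (isRotatingFlow_rotorIK v)
  have hnorm := normSq_def' (a := conjRotation q v)
  rw [normSq_eq_norm_mul_self, (conjRotation q).norm_map, re_conjRotation, hv, hv1] at hnorm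
  simp only [Function.comp_apply]
  linarith

theorem isUniform_inner_conjRotation {u v : ℍ[ℝ]} (hu : u.re = 0) (hu1 : ‖u‖ = 1) (hv : v.re = 0)
    (hv1 : ‖v‖ = 1) :
    pdf.IsUniform (fun q => inner ℝ u (conjRotation q v)) (Set.Icc (-1) 1) muH := by
  obtain ⟨p, rfl⟩ := exists_conjRotation_I_eq hu hu1
  have hinner : (fun q => inner ℝ (conjRotation p (Complex.I : ℂ)) (conjRotation q v)) =
      (fun q => (conjRotation q v).imI) ∘ (p⁻¹ * ·) := by
    ext q
    rw [Function.comp_apply, ← inner_I_eq_imI, ← (conjRotation p).inner_map_map (Complex.I : ℂ),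
      ← conjRotation_mul p (p⁻¹ * q), mul_inv_cancel_left]
  have hmeas : Measurable fun q => (conjRotation q v).imI :=
    (continuous_imI.comp (continuous_conjRotation_left v)).measurable
  rw [hinner, pdf.IsUniform, ← Measure.map_map hmeas (measurable_const_mul _), map_mul_left_eq_self]
  exact isUniform_imI_conjRotation hv hv1

theorem im_conjRotation (q : 𝕊³) (v : ℍ[ℝ]) : (conjRotation q v).im = conjRotation q v.im := by
  rw [← sub_re_self, ← sub_re_self, map_sub, conjRotation_coe, re_conjRotation]

theorem norm_sq_eq_re_sq_add_norm_im_sq (v : ℍ[ℝ]) : ‖v‖ ^ 2 = v.re ^ 2 + ‖v.im‖ ^ 2 := by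
  simp only [sq ‖_‖, ← normSq_eq_norm_mul_self, normSq_def', re_im, imI_im, imJ_im, imK_im]
  ring

theorem norm_mul_add_mul_sq (a b : ℍ[ℝ]) (q : 𝕊³) :
    ‖a * q + q * b‖ ^ 2 = (a.re + b.re) ^ 2 + (‖a.im‖ ^ 2 + ‖b.im‖ ^ 2) +
      2 * inner ℝ a.im (conjRotation q b.im) := by
  have hmul : a * q + q * b = (a + conjRotation q b) * q := by
    rw [add_mul, conjRotation_apply, mul_assoc _ (star _), star_mul_self_of_mem_sphere, mul_one]
  rw [hmul, norm_mul, norm_eq_of_mem_sphere, mul_one, norm_sq_eq_re_sq_add_norm_im_sq, re_add,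
    im_add, re_conjRotation, im_conjRotation, norm_add_sq_real, (conjRotation q).norm_map]
  ring

theorem isUniform_norm_mul_add_mul_sq {a b : ℍ[ℝ]} (ha : a.im ≠ 0) (hb : b.im ≠ 0) :
    pdf.IsUniform (fun q : 𝕊³ => ‖a * q + q * b‖ ^ 2)
      (Set.Icc ((a.re + b.re) ^ 2 + (‖a.im‖ - ‖b.im‖) ^ 2)
        ((a.re + b.re) ^ 2 + (‖a.im‖ + ‖b.im‖) ^ 2)) muH := by
  set X : 𝕊³ → ℝ := fun q =>
    inner ℝ ((‖a.im‖⁻¹ : ℝ) • a.im) (conjRotation q ((‖b.im‖⁻¹ : ℝ) • b.im)) with hXdef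
  have hre (v : ℍ[ℝ]) : ((‖v.im‖⁻¹ : ℝ) • v.im).re = 0 := by rw [re_smul, re_im, smul_zero]
  have hX : pdf.IsUniform X (Set.Icc (-1) 1) muH :=
    isUniform_inner_conjRotation (hre a) (norm_smul_inv_norm (𝕜 := ℝ) ha) (hre b)
      (norm_smul_inv_norm (𝕜 := ℝ) hb)
  have hXcont : Continuous X := by
    have := continuous_conjRotation_left ((‖b.im‖⁻¹ : ℝ) • b.im)
    fun_prop
  have hpos : 0 < 2 * (‖a.im‖ * ‖b.im‖) := by positivity
  have hL : (fun q : 𝕊³ => ‖a * q + q * b‖ ^ 2) = fun q =>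
      ((a.re + b.re) ^ 2 + (‖a.im‖ ^ 2 + ‖b.im‖ ^ 2)) + 2 * (‖a.im‖ * ‖b.im‖) * X q := by
    ext q
    rw [norm_mul_add_mul_sq, hXdef]
    simp only [map_smul, real_inner_smul_left, real_inner_smul_right]
    field_simp
  rw [hL]
  refine isUniform_const_add_mul hXcont.measurable.aemeasurable measurableSet_Icc _ hpos.ne' ?_
  convert hX using 1
  ext x
  simp only [Set.mem_preimage, Set.mem_Icc]
  constructor <;> rintro ⟨h₁, h₂⟩ <;> constructor <;> nlinarith

end UnitQuaternions

/-- Mahler measure of the Sylvester-form linear polynomial `ax + xb`. -/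
theorem mahlerH_sylvester (a b : Quaternion ℝ) (ha : a.im ≠ 0) (hb : b.im ≠ 0)
    (lp lm : ℝ)
    (hlp : lp = (a.re + b.re) ^ 2 + (‖a.im‖ + ‖b.im‖) ^ 2)
    (hlm : lm = (a.re + b.re) ^ 2 + (‖a.im‖ - ‖b.im‖) ^ 2) :
    mahlerH (fun q => a * q + q * b) =
      (1 / 2) * ((lp * Real.log lp - lm * Real.log lm) / (lp - lm) - 1) := by
  have hlt : lm < lp := by
    rw [hlp, hlm]
    nlinarith [mul_pos (norm_pos_iff.2 ha) (norm_pos_iff.2 hb)]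
  have hunif : pdf.IsUniform (fun q : 𝕊³ => ‖a * q + q * b‖ ^ 2) (Set.Icc lm lp) muH := by
    rw [hlp, hlm]
    exact isUniform_norm_mul_add_mul_sq ha hb
  calc mahlerH (fun q => a * q + q * b)
      = ∫ q : 𝕊³, 1 / 2 * log (‖a * q + q * b‖ ^ 2) ∂muH := by
        refine integral_congr_ae (.of_forall fun q => ?_)
        simp only [log_pow]
        ring
    _ = 1 / 2 * ⨍ x in Set.Icc lm lp, log x := by
        rw [integral_const_mul, integral_comp_of_isUniform (by fun_prop) hunif
          measurable_log.stronglyMeasurable]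
    _ = 1 / 2 * ⨍ x in lm..lp, log x := by
        rw [Set.uIoc_of_le hlt.le, setAverage_congr Ioc_ae_eq_Icc]
    _ = (1 / 2) * ((lp * log lp - lm * log lm) / (lp - lm) - 1) := by
        rw [intervalAverage_log hlt.ne]
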